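/- Let $R_n = k\langle x_1, \ldots, x_n \rangle$ be the free graded associative dg-algebra on $n$ generators, each of degree $1$, over a field $k$ of characteristic $0$, with differential determined by $d(x_i) = x_i^2$ for all $i$. Then $H^\bullet(R_n) \cong k$, concentrated in degree $0$. -/

import Mathlib

/-- A differential graded algebra over `k`, concentrated in non-negative degrees: an
`ℕ`-graded `k`-algebra equipped with a square-zero degree `+1` differential satisfying
the graded Leibniz rule. -/
structure DGA (k : Type) [Field k] where
  A : Type
  ringA : Ring A
  algA : @Algebra k A _ ringA.toSemiring
  grading : ℕ → @Submodule k A _ (@AddCommGroup.toAddCommMonoid _ ringA.toAddCommGroup)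
    (@Algebra.toModule k A _ ringA.toSemiring algA)
  graded : @GradedAlgebra ℕ k A _ _ _ _ _ grading
  d : A →ₗ[k] A
  d_sq : d.comp d = 0
  d_deg : ∀ (i : ℕ) (a : A), a ∈ grading i → d a ∈ grading (i + 1)
  leibniz : ∀ (i : ℕ) (a : A), a ∈ grading i → ∀ b : A,
    d (a * b) = d a * b + ((-1 : k) ^ i) • (a * d b)

attribute [instance] DGA.ringA DGA.algA

/-- The (total) cohomology of a dg-algebra: `ker d / im d`. -/
def DGA.H {k : Type} [Field k] (X : DGA k) : Type :=
  ↥(LinearMap.ker X.d) ⧸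
    (Submodule.comap (LinearMap.ker X.d).subtype (LinearMap.range X.d))

noncomputable instance {k : Type} [Field k] (X : DGA k) : AddCommGroup X.H := by
  unfold DGA.H; infer_instance

noncomputable instance {k : Type} [Field k] (X : DGA k) : Module k X.H := by
  unfold DGA.H; infer_instance

/-- A homomorphism of dg-algebras: an algebra map preserving the grading and commuting
with the differentials. -/
structure DGAHom {k : Type} [Field k] (X Y : DGA k) where
  toAlg : X.A →ₐ[k] Y.A
  map_d : ∀ a : X.A, toAlg (X.d a) = Y.d (toAlg a)
  map_grading : ∀ (i : ℕ) (a : X.A), a ∈ X.grading i → toAlg a ∈ Y.grading i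

/-!
On `k⟨xₐ⟩` the differential reads `d (xₐ b) = xₐ (xₐ b - d b)`. Let `∂ₐ` be left division by `xₐ`,
so `∂ₐ (xₐ b) = b`, while `∂ₐ` kills `1` and every word with another first letter. It satisfies
`∂ₐ d b = xₐ ∂ₐ b - d ∂ₐ b`. Hence `h (xₐ b) = xₐ ∂ₐ b`, `h 1 = 0`, which deletes the first letter
of a word when it equals the second and otherwise kills the word, is a contracting homotopy onto
the constants: `d h + h d = 1 - ε`.
-/

noncomputable section

/-! ### Contractible dg-algebras -/

section Contraction

variable {k : Type} [Field k] {X Y Z : DGA k}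

attribute [instance] DGA.graded

namespace DGAHom

/-- The identity homomorphism of a dg-algebra. -/
def id (X : DGA k) : DGAHom X X where
  toAlg := AlgHom.id k X.A
  map_d _ := rfl
  map_grading _ _ ha := ha

/-- The composite of two homomorphisms of dg-algebras, the second one written first. -/
def comp (g : DGAHom Y Z) (f : DGAHom X Y) : DGAHom X Z where
  toAlg := g.toAlg.comp f.toAlg
  map_d a := by simp only [AlgHom.comp_apply, f.map_d, g.map_d]
  map_grading i a ha := g.map_grading i _ (f.map_grading i a ha)

end DGAHom

namespace DGA

theorem d_one (X : DGA k) : X.d 1 = 0 := by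
  simpa using X.leibniz 0 1 SetLike.GradedOne.one_mem 1

theorem d_algebraMap (X : DGA k) (c : k) : X.d (algebraMap k X.A c) = 0 := by
  rw [Algebra.algebraMap_eq_smul_one, map_smul, d_one, smul_zero]

/-- The map `k → H(X)` induced by the unit of `X`, sending a scalar to the class of the
corresponding constant. -/
def unitH (X : DGA k) : k →ₗ[k] X.H :=
  (Submodule.comap (LinearMap.ker X.d).subtype (LinearMap.range X.d)).mkQ ∘ₗ
    (Algebra.linearMap k X.A).codRestrict (LinearMap.ker X.d) X.d_algebraMap

/-- A contraction of a dg-algebra onto its constants: a linear functional normalised at `1`,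
together with a homotopy from the identity to the projection onto `k · 1` along that functional.
Compatibility of the functional with the differential is a consequence, see
`DGA.Contraction.augmentation_d`. -/
structure Contraction (X : DGA k) where
  augmentation : X.A →ₗ[k] k
  homotopy : X.A →ₗ[k] X.A
  augmentation_one : augmentation 1 = 1
  d_homotopy_add_homotopy_d (a : X.A) :
    X.d (homotopy a) + homotopy (X.d a) = a - augmentation a • 1

namespace Contraction

theorem augmentation_d (c : X.Contraction) (a : X.A) : c.augmentation (X.d a) = 0 := by
  have d_d (b : X.A) : X.d (X.d b) = 0 := LinearMap.congr_fun X.d_sq b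
  have d_homotopy_d : X.d (c.homotopy (X.d a)) = X.d a := by
    simpa [d_d, d_one] using congrArg X.d (c.d_homotopy_add_homotopy_d a)
  have augmentation_d_smul : c.augmentation (X.d a) • (1 : X.A) = 0 := by
    have h := c.d_homotopy_add_homotopy_d (X.d a)
    rwa [d_d, map_zero, add_zero, d_homotopy_d, eq_comm, sub_eq_self] at h
  simpa [c.augmentation_one] using congrArg c.augmentation augmentation_d_smul

theorem bijective_unitH (c : X.Contraction) : Function.Bijective X.unitH := by
  constructor
  · rw [injective_iff_map_eq_zero]
    intro r hr
    obtain ⟨b, hb : X.d b = algebraMap k X.A r⟩ := (Submodule.Quotient.mk_eq_zero _).mp hr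
    have hr' := c.augmentation_d b
    rwa [hb, Algebra.algebraMap_eq_smul_one, map_smul, c.augmentation_one, smul_eq_mul,
      mul_one] at hr'
  · intro y
    obtain ⟨⟨a, ha⟩, rfl⟩ := Submodule.Quotient.mk_surjective _ y
    have d_homotopy : X.d (c.homotopy a) = a - algebraMap k X.A (c.augmentation a) := by
      simpa [LinearMap.mem_ker.mp ha, Algebra.algebraMap_eq_smul_one]
        using c.d_homotopy_add_homotopy_d a
    exact ⟨c.augmentation a,
      Eq.symm <| (Submodule.Quotient.eq _).mpr ⟨c.homotopy a, d_homotopy⟩⟩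

/-- A retract of a contractible dg-algebra is contractible. -/
def ofRetract (c : Y.Contraction) (i : DGAHom X Y) (p : DGAHom Y X)
    (hpi : ∀ a, p.toAlg (i.toAlg a) = a) : X.Contraction where
  augmentation := c.augmentation ∘ₗ i.toAlg.toLinearMap
  homotopy := p.toAlg.toLinearMap ∘ₗ c.homotopy ∘ₗ i.toAlg.toLinearMap
  augmentation_one := by simp [c.augmentation_one]
  d_homotopy_add_homotopy_d a := by
    simpa [hpi, p.map_d, i.map_d] using
      congrArg p.toAlg (c.d_homotopy_add_homotopy_d (i.toAlg a))

end Contraction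

end DGA

end Contraction

/-! ### The free associative algebra on words -/

/-- The free associative algebra on `ι`, as the monoid algebra of the free monoid of words.
Words are written additively because Mathlib grades only additive monoid algebras. -/
abbrev WordAlgebra (k ι : Type*) [CommSemiring k] : Type _ :=
  AddMonoidAlgebra k (FreeAddMonoid ι)

namespace WordAlgebra

section Semiring

variable {k ι M : Type*} [CommSemiring k] [AddCommMonoid M] [Module k M]

/-- The word `w` as an element of the free algebra. -/
def word (w : FreeAddMonoid ι) : WordAlgebra k ι := AddMonoidAlgebra.single w 1

/-- The free generator `xₐ`. -/
def gen (a : ι) : WordAlgebra k ι := word (FreeAddMonoid.of a)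

theorem word_of_add (a : ι) (w : FreeAddMonoid ι) :
    (word (FreeAddMonoid.of a + w) : WordAlgebra k ι) = gen a * word w := by
  simp [gen, word, AddMonoidAlgebra.single_mul_single]

theorem linearMap_ext_word {f g : WordAlgebra k ι →ₗ[k] M} (h : ∀ w, f (word w) = g (word w)) :
    f = g :=
  (AddMonoidAlgebra.basis (FreeAddMonoid ι) k).ext fun w => by simpa [word] using h w

theorem linearMap_ext_gen_mul {f g : WordAlgebra k ι →ₗ[k] M} (one : f 1 = g 1)
    (gen_mul : ∀ a b, f b = g b → f (gen a * b) = g (gen a * b)) : f = g :=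
  linearMap_ext_word fun w => by
    induction w using FreeAddMonoid.inductionOn' with
    | zero => exact one
    | of_add a w ih => simpa only [word_of_add] using gen_mul a _ ih

/-- Linear recursion on the first letter: the linear map `F` with `F 1 = m` and
`F (xₐ b) = f a (b, F b)`. -/
def linearRec (m : M) (f : ι → WordAlgebra k ι × M →ₗ[k] M) : WordAlgebra k ι →ₗ[k] M :=
  (AddMonoidAlgebra.basis (FreeAddMonoid ι) k).constr k fun w =>
    w.recOn m fun a v r => f a (word v, r)

theorem linearRec_word (m : M) (f : ι → WordAlgebra k ι × M →ₗ[k] M) (w : FreeAddMonoid ι) :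
    linearRec m f (word w) = w.recOn m fun a v r => f a (word v, r) := by
  rw [linearRec, word, ← AddMonoidAlgebra.basis_apply, Module.Basis.constr_basis]

@[simp]
theorem linearRec_one (m : M) (f : ι → WordAlgebra k ι × M →ₗ[k] M) : linearRec m f 1 = m :=
  linearRec_word m f 0

@[simp]
theorem linearRec_gen_mul (m : M) (f : ι → WordAlgebra k ι × M →ₗ[k] M) (a : ι)
    (b : WordAlgebra k ι) : linearRec m f (gen a * b) = f a (b, linearRec m f b) := by
  suffices linearRec m f ∘ₗ LinearMap.mulLeft k (gen a) =
      f a ∘ₗ LinearMap.id.prod (linearRec m f) by simpa using LinearMap.congr_fun this b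
  refine linearMap_ext_word fun w => ?_
  simp [← word_of_add, linearRec_word, FreeAddMonoid.recOn_of_add]

/-- The algebra homomorphism extending an assignment of values to the generators. -/
def lift {B : Type*} [Semiring B] [Algebra k B] (y : ι → B) : WordAlgebra k ι →ₐ[k] B :=
  AddMonoidAlgebra.lift k B _ <| AddMonoidHom.toMultiplicativeLeft <|
    FreeAddMonoid.lift fun a => Additive.ofMul (y a)

@[simp]
theorem lift_gen {B : Type*} [Semiring B] [Algebra k B] (y : ι → B) (a : ι) :
    lift y (gen a : WordAlgebra k ι) = y a := by
  simp [lift, gen, word]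

variable (k ι) in
/-- The grading by word length. -/
abbrev lengthGrading : ℕ → Submodule k (WordAlgebra k ι) :=
  AddMonoidAlgebra.gradeBy k
    ({ toFun := FreeAddMonoid.length
       map_zero' := rfl
       map_add' := FreeAddMonoid.length_add } : FreeAddMonoid ι →+ ℕ)

theorem gen_mem_lengthGrading (a : ι) : gen a ∈ lengthGrading k ι 1 :=
  AddMonoidAlgebra.single_mem_gradeBy _ _ _

theorem gen_mul_mem_lengthGrading (a : ι) {i : ℕ} {b : WordAlgebra k ι}
    (hb : b ∈ lengthGrading k ι i) : gen a * b ∈ lengthGrading k ι (i + 1) :=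
  add_comm 1 i ▸ SetLike.mul_mem_graded (gen_mem_lengthGrading a) hb

theorem lengthGrading_le {S : ℕ → Submodule k (WordAlgebra k ι)} (one : 1 ∈ S 0)
    (gen_mul : ∀ i a b, b ∈ lengthGrading k ι i → b ∈ S i → gen a * b ∈ S (i + 1)) (i : ℕ) :
    lengthGrading k ι i ≤ S i := by
  have word_mem (w : FreeAddMonoid ι) : word w ∈ S w.length := by
    induction w using FreeAddMonoid.inductionOn' with
    | zero => exact one
    | of_add a w ih =>
      rw [word_of_add, FreeAddMonoid.length_add, FreeAddMonoid.length_of, add_comm]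
      exact gen_mul _ a _ (AddMonoidAlgebra.single_mem_gradeBy _ _ _) ih
  intro b hb
  rw [← AddMonoidAlgebra.sum_coeff_single b]
  refine Submodule.sum_mem _ fun w hw => ?_
  rw [← hb w hw, ← mul_one (b.coeff w), ← smul_eq_mul, ← AddMonoidAlgebra.smul_single]
  exact Submodule.smul_mem _ _ (word_mem w)

end Semiring

/-! ### The differential and its contracting homotopy -/

section Ring

variable {k ι : Type*} [CommRing k]

/-- The differential with `d xₐ = xₐ²`, defined by `d (xₐ b) = xₐ (xₐ b - d b)`, which is what the
graded Leibniz rule forces. -/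
def d : WordAlgebra k ι →ₗ[k] WordAlgebra k ι :=
  linearRec 0 fun a => LinearMap.mulLeft k (gen a) ∘ₗ
    (LinearMap.mulLeft k (gen a) ∘ₗ LinearMap.fst k _ _ - LinearMap.snd k _ _)

@[simp]
theorem d_one : d (1 : WordAlgebra k ι) = 0 := linearRec_one _ _

theorem d_gen_mul (a : ι) (b : WordAlgebra k ι) :
    d (gen a * b) = gen a * (gen a * b - d b) := linearRec_gen_mul _ _ a b

theorem d_gen (a : ι) : d (gen a : WordAlgebra k ι) = gen a * gen a := by
  simpa using d_gen_mul a (1 : WordAlgebra k ι)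

theorem d_comp_d : (d : WordAlgebra k ι →ₗ[k] WordAlgebra k ι) ∘ₗ d = 0 :=
  linearMap_ext_gen_mul (by simp) fun a b ih => by
    have d_d : d (d b) = 0 := ih
    simp [d_gen_mul, d_d]

theorem lengthGrading_le_comap_d (i : ℕ) :
    lengthGrading k ι i ≤ (lengthGrading k ι (i + 1)).comap d := by
  refine lengthGrading_le (S := fun i => (lengthGrading k ι (i + 1)).comap d) ?_ ?_ i
  · simp only [Submodule.mem_comap, d_one, zero_mem]
  · intro i a b hb hdb
    rw [Submodule.mem_comap, d_gen_mul]
    exact gen_mul_mem_lengthGrading a (sub_mem (gen_mul_mem_lengthGrading a hb) hdb)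

theorem d_mul_of_mem_lengthGrading {i : ℕ} {a : WordAlgebra k ι} (ha : a ∈ lengthGrading k ι i)
    (b : WordAlgebra k ι) : d (a * b) = d a * b + (-1 : k) ^ i • (a * d b) := by
  let S (i : ℕ) : Submodule k (WordAlgebra k ι) :=
    LinearMap.eqLocus (d ∘ₗ LinearMap.mulRight k b)
      (LinearMap.mulRight k b ∘ₗ d + (-1 : k) ^ i • LinearMap.mulRight k (d b))
  have mem_S {i : ℕ} {a : WordAlgebra k ι} :
      a ∈ S i ↔ d (a * b) = d a * b + (-1 : k) ^ i • (a * d b) := by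
    simp [S, LinearMap.mem_eqLocus]
  refine mem_S.mp <| lengthGrading_le (S := S) ?_ ?_ i ha
  · simp [mem_S]
  · intro i c a _ ih
    rw [mem_S] at ih ⊢
    rw [mul_assoc, d_gen_mul, d_gen_mul, ih, pow_succ]
    simp only [mul_sub, mul_add, sub_mul, mul_assoc, mul_smul_comm, mul_neg, mul_one, neg_smul]
    abel

/-- The augmentation `ε`, with `ε 1 = 1` and `ε xₐ = 0`. -/
def augmentation : WordAlgebra k ι →ₗ[k] k := linearRec 1 0

variable [DecidableEq ι]

/-- Left division `∂ₐ` by the generator `xₐ`, killing the words that do not start with `xₐ`. -/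
def leftDiv (a : ι) : WordAlgebra k ι →ₗ[k] WordAlgebra k ι :=
  linearRec 0 (Pi.single a (LinearMap.fst k _ _))

@[simp]
theorem leftDiv_one (a : ι) : leftDiv a (1 : WordAlgebra k ι) = 0 := linearRec_one _ _

@[simp]
theorem leftDiv_gen_mul_self (a : ι) (b : WordAlgebra k ι) : leftDiv a (gen a * b) = b := by
  simp [leftDiv]

theorem leftDiv_gen_mul_of_ne {a c : ι} (h : c ≠ a) (b : WordAlgebra k ι) :
    leftDiv a (gen c * b) = 0 := by
  simp [leftDiv, h]

theorem leftDiv_d (a : ι) (b : WordAlgebra k ι) :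
    leftDiv a (d b) = gen a * leftDiv a b - d (leftDiv a b) := by
  suffices leftDiv a ∘ₗ d = (LinearMap.mulLeft k (gen a) - d) ∘ₗ leftDiv a by
    simpa using LinearMap.congr_fun this b
  refine linearMap_ext_gen_mul (by simp) fun c b _ => ?_
  obtain rfl | h := eq_or_ne c a
  · simp [d_gen_mul]
  · simp [d_gen_mul, leftDiv_gen_mul_of_ne h]

/-- The contracting homotopy `h (xₐ b) = xₐ ∂ₐ b`. -/
def homotopy : WordAlgebra k ι →ₗ[k] WordAlgebra k ι :=
  linearRec 0 fun a => LinearMap.mulLeft k (gen a) ∘ₗ leftDiv a ∘ₗ LinearMap.fst k _ _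

theorem homotopy_gen_mul (a : ι) (b : WordAlgebra k ι) :
    homotopy (gen a * b) = gen a * leftDiv a b := linearRec_gen_mul _ _ a b

theorem d_homotopy_add_homotopy_d (b : WordAlgebra k ι) :
    d (homotopy b) + homotopy (d b) = b - augmentation b • 1 := by
  suffices d ∘ₗ homotopy + homotopy ∘ₗ d = LinearMap.id - augmentation.smulRight 1 by
    simpa using LinearMap.congr_fun this b
  refine linearMap_ext_gen_mul (by simp [homotopy, augmentation]) fun a b _ => ?_
  calc d (homotopy (gen a * b)) + homotopy (d (gen a * b))
      = gen a * (gen a * leftDiv a b - d (leftDiv a b)) + gen a * (b - leftDiv a (d b)) := by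
        simp only [homotopy_gen_mul, d_gen_mul, map_sub, leftDiv_gen_mul_self]
    _ = gen a * b := by rw [leftDiv_d, ← mul_add, add_sub_cancel]
    _ = gen a * b - augmentation (gen a * b) • 1 := by simp [augmentation]

end Ring

end WordAlgebra

/-! ### The free dg-algebra -/

section FreeDGA

variable (k : Type) [Field k] (ι : Type)

/-- The free associative algebra on generators `xₐ` of degree `1`, with `d xₐ = xₐ²`. -/
def freeDGA : DGA k where
  A := WordAlgebra k ι
  ringA := inferInstance
  algA := inferInstance
  grading := WordAlgebra.lengthGrading k ι
  graded := inferInstance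
  d := WordAlgebra.d
  d_sq := WordAlgebra.d_comp_d
  d_deg i _ ha := WordAlgebra.lengthGrading_le_comap_d i ha
  leibniz _ _ ha b := WordAlgebra.d_mul_of_mem_lengthGrading ha b

namespace freeDGA

variable {k ι}

/-- The homomorphism out of the free dg-algebra given by degree-one elements with `d y = y²`. -/
def lift {X : DGA k} (y : ι → X.A) (hy : ∀ a, y a ∈ X.grading 1)
    (hdy : ∀ a, X.d (y a) = y a * y a) : DGAHom (freeDGA k ι) X where
  toAlg := WordAlgebra.lift y
  map_d b := by
    suffices (WordAlgebra.lift y).toLinearMap ∘ₗ WordAlgebra.d =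
        X.d ∘ₗ (WordAlgebra.lift y).toLinearMap from LinearMap.congr_fun this b
    refine WordAlgebra.linearMap_ext_gen_mul (by simp [X.d_one]) fun a b ih => ?_
    have lift_d : WordAlgebra.lift y (WordAlgebra.d b) = X.d (WordAlgebra.lift y b) := ih
    simp [WordAlgebra.d_gen_mul, X.leibniz 1 _ (hy a), hdy, lift_d, mul_add, mul_assoc,
      sub_eq_add_neg]
  map_grading i b hb := by
    refine WordAlgebra.lengthGrading_le
      (S := fun i => (X.grading i).comap (WordAlgebra.lift y).toLinearMap) ?_ ?_ i hb
    · simpa using SetLike.GradedOne.one_mem (A := X.grading)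
    · intro i a b _ ih
      simpa [add_comm] using SetLike.mul_mem_graded (hy a) ih

variable (k ι) in
/-- The contraction of the free dg-algebra onto its constants given by `ε` and `h`. -/
def contraction [DecidableEq ι] : (freeDGA k ι).Contraction where
  augmentation := WordAlgebra.augmentation
  homotopy := WordAlgebra.homotopy
  augmentation_one := WordAlgebra.linearRec_one _ _
  d_homotopy_add_homotopy_d := WordAlgebra.d_homotopy_add_homotopy_d

end freeDGA

end FreeDGA

end

/-- Bijectivity of the unit map says that every class is represented by a constant, so that the
cohomology is concentrated in degree `0`. -/
theorem stmt_2_general {k : Type} [Field k] {ι : Type} (R : DGA k) (x : ι → R.A)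
    (hx : ∀ i, x i ∈ R.grading 1)
    (hdx : ∀ i, R.d (x i) = x i * x i)
    (hfree : ∀ (C : DGA k) (y : ι → C.A),
      (∀ i, y i ∈ C.grading 1) → (∀ i, C.d (y i) = y i * y i) →
        ∃! f : DGAHom R C, ∀ i, f.toAlg (x i) = y i) :
    Function.Bijective R.unitH := by
  classical
  obtain ⟨f, hf, -⟩ := hfree (freeDGA k ι) WordAlgebra.gen WordAlgebra.gen_mem_lengthGrading
    WordAlgebra.d_gen
  let g : DGAHom (freeDGA k ι) R := freeDGA.lift x hx hdx
  have g_comp_f : g.comp f = DGAHom.id R :=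
    (hfree R x hx hdx).unique
      (fun i => (congrArg g.toAlg (hf i)).trans (WordAlgebra.lift_gen x i)) fun _ => rfl
  have g_f (a : R.A) : g.toAlg (f.toAlg a) = a :=
    congrArg (fun e : DGAHom R R => e.toAlg a) g_comp_f
  exact ((freeDGA.contraction k ι).ofRetract f g g_f).bijective_unitH

/- STATEMENT 2: Let `Rₙ = k⟨x₁, …, xₙ⟩` be the free graded associative dg-algebra over
a field `k` of characteristic `0` on `n` generators `xᵢ`, each of degree `1`, with
differential determined by `d xᵢ = xᵢ²` (i.e. `Rₙ` is the dg-algebra satisfying the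
corresponding universal property among dg-algebras).  Then `H•(Rₙ) ≅ k`, concentrated
in degree `0`. -/
theorem stmt_2 (k : Type) [Field k] [CharZero k] (n : ℕ) (R : DGA k)
    (x : Fin n → R.A)
    (hx : ∀ i, x i ∈ R.grading 1)
    (hdx : ∀ i, R.d (x i) = x i * x i)
    (hfree : ∀ (C : DGA k) (y : Fin n → C.A),
      (∀ i, y i ∈ C.grading 1) → (∀ i, C.d (y i) = y i * y i) →
        ∃! f : DGAHom R C, ∀ i, f.toAlg (x i) = y i) :
    Nonempty (R.H ≃ₗ[k] k) := by
  exact ⟨(LinearEquiv.ofBijective R.unitH (stmt_2_general R x hx hdx hfree)).symm⟩
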